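/- arXiv:1912.02879 — 6 statements merged into one kernel-verified Lean document; each statement's English description precedes it below -/
import Mathlib

section
/- Let k ∈ {1,…,K} and suppose that k masks some k' ≠ k, i.e. supp(Q_k) ⊆ supp(Q_{k'}) for some k' ≠ k. Then the latent factor Θ_k is not identifiable: there exist matrices Θ̃ ∈ ℝ^{N×K} and Ã ∈ ℝ^{J×K} satisfying assumptions (1)–(3) with Θ̃Ãᵀ = ΘAᵀ such that Θ̃_k and Θ_k are linearly independent. -/
/-!
Adding `Θ_{k'}` to the column `Θ_k` and subtracting `A_k` from the column `A_{k'}` leaves `Θ Aᵀ`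
unchanged, because
`Θ_k A_kᵀ + Θ_{k'} A_{k'}ᵀ = (Θ_k + Θ_{k'}) A_kᵀ + Θ_{k'} (A_{k'} - A_k)ᵀ`:
`Θ` is multiplied on the right by a transvection and `A` by the transpose of its inverse. Masking
keeps `A_{k'} - A_k` supported in `supp Q_{k'}`. Column operations preserve linear independence,
also on each block `R(S)`: if `k ∈ S` the added column belongs to the block, and if `k ∉ S` it
vanishes there.
-/

open Matrix

/-- The support of column `k` of the binary design matrix `Q`. -/
def suppQ {J K : ℕ} (Q : Fin J → Fin K → Bool) (k : Fin K) : Set (Fin J) :=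
  {j | Q j k = true}

/-- `R(S)`: the rows `j` such that `Q j k = 1` exactly for `k ∈ S`. -/
def Rset {J K : ℕ} (Q : Fin J → Fin K → Bool) (S : Set (Fin K)) : Set (Fin J) :=
  {j | ∀ k, Q j k = true ↔ k ∈ S}

/-- Assumption (1): the columns of `Θ` are linearly independent. -/
def Assm1 {N K : ℕ} (Θ : Matrix (Fin N) (Fin K) ℝ) : Prop :=
  LinearIndependent ℝ (fun k : Fin K => fun i : Fin N => Θ i k)

/-- Assumption (2): for every `S` with `R(S)` nonempty, the columns of the
submatrix `A_{[R(S),S]}` are linearly independent. -/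
def Assm2 {J K : ℕ} (A : Matrix (Fin J) (Fin K) ℝ) (Q : Fin J → Fin K → Bool) : Prop :=
  ∀ S : Set (Fin K), (Rset Q S).Nonempty →
    LinearIndependent ℝ (fun k : S => fun j : Rset Q S => A j.1 k.1)

/-- Assumption (3): `A_k(j) = 0` whenever `Q_k(j) = 0`. -/
def Assm3 {J K : ℕ} (A : Matrix (Fin J) (Fin K) ℝ) (Q : Fin J → Fin K → Bool) : Prop :=
  ∀ j k, Q j k = false → A j k = 0

theorem linearIndependent_pair_of_ne {R ι V : Type*} [Ring R] [AddCommGroup V] [Module R V]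
    {v : ι → V} (hv : LinearIndependent R v) {i j : ι} (hij : i ≠ j) :
    LinearIndependent R ![v i, v j] :=
  LinearIndependent.pair_iff.2 ((LinearIndepOn.pair_iff v hij).1 (hv.linearIndepOn _))

section Transvection

variable {R m m' n n' : Type*} [CommRing R] [Fintype n] [DecidableEq n]

theorem col_submatrix_mul_transvection (M : Matrix m n R) (r : m' → m) (s : n' → n) (i j : n)
    (c : R) :
    ((M * transvection i j c).submatrix r s).col =
      (M.submatrix r s).col + fun l => (Pi.single j c : n → R) (s l) • fun a => M (r a) i := by
  ext l a
  rcases eq_or_ne (s l) j with hl | hl <;> simp [hl]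

variable {i j : n}

theorem linearIndependent_col_submatrix_mul_transvection_iff {M : Matrix m n R} {r : m' → m}
    {s : n' → n} (hij : i ≠ j) (c : R) (hi : i ∈ Set.range s ∨ ∀ a, M (r a) i = 0) :
    LinearIndependent R ((M * transvection i j c).submatrix r s).col ↔
      LinearIndependent R (M.submatrix r s).col := by
  rw [col_submatrix_mul_transvection]
  rcases hi with ⟨l, rfl⟩ | hzero
  · exact linearIndependent_add_smul_iff (c := fun b => (Pi.single j c : n → R) (s b))
      (Pi.single_eq_of_ne hij _)
  · have hadded : (fun b => (Pi.single j c : n → R) (s b) • fun a => M (r a) i) = 0 := by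
      ext b a
      simp [hzero]
    rw [hadded, add_zero]

theorem linearIndependent_col_mul_transvection_iff {M : Matrix m n R} (hij : i ≠ j) (c : R) :
    LinearIndependent R (M * transvection i j c).col ↔ LinearIndependent R M.col :=
  linearIndependent_col_submatrix_mul_transvection_iff (r := id) (s := id) hij c (.inl ⟨i, rfl⟩)

theorem mul_transvection_mul_transpose_mul_transvection_neg (M : Matrix m n R) (P : Matrix m' n R)
    (hij : i ≠ j) (c : R) :
    M * transvection i j c * (P * transvection j i (-c))ᵀ = M * Pᵀ := by
  have htranspose : (transvection j i (-c))ᵀ = transvection i j (-c) := by simp [transvection]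
  rw [transpose_mul, htranspose, Matrix.mul_assoc, ← Matrix.mul_assoc (transvection i j c),
    transvection_mul_transvection_same i j hij, add_neg_cancel, transvection_zero, Matrix.one_mul]

theorem linearIndependent_pair_col_mul_transvection_one {M : Matrix m n R}
    (hM : LinearIndependent R M.col) (hij : i ≠ j) :
    LinearIndependent R ![(M * transvection i j (1 : R)).col j, M.col j] := by
  have hcol : (M * transvection i j (1 : R)).col j = M.col i + M.col j := by
    ext a
    simp [add_comm]
  rw [hcol, LinearIndependent.pair_add_left_iff]
  exact linearIndependent_pair_of_ne hM hij

end Transvection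

section Design

variable {R m κ : Type*} {A : Matrix m κ R} {Q : m → κ → Bool} {k k' : κ}

/-- `A` vanishes wherever the design matrix `Q` does: assumption (3), for any index types. -/
def IsSupportedOn [Zero R] (A : Matrix m κ R) (Q : m → κ → Bool) : Prop :=
  ∀ j l, Q j l = false → A j l = 0

/-- The set `R(S)` of rows of the design matrix `Q` whose support is exactly `S`, for any index
types. -/
def rowsWithSupport (Q : m → κ → Bool) (S : Set κ) : Set m :=
  {j | ∀ l, Q j l = true ↔ l ∈ S}

/-- Every nonempty block `A_{[R(S), S]}` has linearly independent columns: assumption (2), over any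
semiring and any index types. -/
def HasIndependentBlocks [Semiring R] (A : Matrix m κ R) (Q : m → κ → Bool) : Prop :=
  ∀ S : Set κ, (rowsWithSupport Q S).Nonempty →
    LinearIndependent R (A.submatrix ((↑) : rowsWithSupport Q S → m) ((↑) : S → κ)).col

theorem IsSupportedOn.apply_eq_zero_of_mem_rowsWithSupport [Zero R] (hA : IsSupportedOn A Q)
    {S : Set κ} {j : m} (hj : j ∈ rowsWithSupport Q S) (hk : k ∉ S) : A j k = 0 :=
  hA j k (Bool.eq_false_iff.2 fun hjk => hk ((hj k).1 hjk))

variable [CommRing R] [Fintype κ] [DecidableEq κ]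

theorem IsSupportedOn.mul_transvection (hA : IsSupportedOn A Q)
    (hmask : {j | Q j k = true} ⊆ {j | Q j k' = true}) (c : R) :
    IsSupportedOn (A * transvection k k' c) Q := by
  intro j l hjl
  rcases eq_or_ne l k' with rfl | hl
  · have hjk : Q j k = false := Bool.eq_false_iff.2 fun h => Bool.eq_false_iff.1 hjl (hmask h)
    simp [hA j l hjl, hA j k hjk]
  · simp [hl, hA j l hjl]

theorem HasIndependentBlocks.mul_transvection (hA : HasIndependentBlocks A Q)
    (hAQ : IsSupportedOn A Q) (hne : k ≠ k') (c : R) :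
    HasIndependentBlocks (A * transvection k k' c) Q := by
  intro S hS
  have hk : k ∈ Set.range ((↑) : S → κ) ∨ ∀ j : rowsWithSupport Q S, A j k = 0 := by
    rw [Subtype.range_coe]
    exact or_iff_not_imp_left.2 fun hkS j => hAQ.apply_eq_zero_of_mem_rowsWithSupport j.2 hkS
  exact (linearIndependent_col_submatrix_mul_transvection_iff hne c hk).2 (hA S hS)

end Design

theorem latent_factor_not_identifiable_of_masking_general
    {R ι m κ : Type*} [CommRing R] [Fintype κ]
    {Θ : Matrix ι κ R} {A : Matrix m κ R} {Q : m → κ → Bool}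
    (hΘ : LinearIndependent R Θ.col) (hA : HasIndependentBlocks A Q) (hAQ : IsSupportedOn A Q)
    {k k' : κ} (hne : k' ≠ k) (hmask : {j | Q j k = true} ⊆ {j | Q j k' = true}) :
    ∃ (Θ' : Matrix ι κ R) (A' : Matrix m κ R),
      LinearIndependent R Θ'.col ∧ HasIndependentBlocks A' Q ∧ IsSupportedOn A' Q ∧
        Θ' * A'ᵀ = Θ * Aᵀ ∧ LinearIndependent R ![Θ'.col k, Θ.col k] := by
  classical
  exact ⟨Θ * transvection k' k 1, A * transvection k k' (-1),
    (linearIndependent_col_mul_transvection_iff hne 1).2 hΘ,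
    hA.mul_transvection hAQ hne.symm (-1),
    hAQ.mul_transvection hmask (-1),
    mul_transvection_mul_transpose_mul_transvection_neg Θ A hne 1,
    linearIndependent_pair_col_mul_transvection_one hΘ hne⟩

theorem latent_factor_not_identifiable_of_masking
    {K N J : ℕ} (hK : 0 < K) (hN : 0 < N) (hJ : 0 < J)
    (Θ : Matrix (Fin N) (Fin K) ℝ) (A : Matrix (Fin J) (Fin K) ℝ)
    (Q : Fin J → Fin K → Bool)
    (hΘ : Assm1 Θ) (hA2 : Assm2 A Q) (hA3 : Assm3 A Q)
    (k : Fin K)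
    (hmask : ∃ k' : Fin K, k' ≠ k ∧ suppQ Q k ⊆ suppQ Q k') :
    ∃ (Θ' : Matrix (Fin N) (Fin K) ℝ) (A' : Matrix (Fin J) (Fin K) ℝ),
      Assm1 Θ' ∧ Assm2 A' Q ∧ Assm3 A' Q ∧ Θ' * A'ᵀ = Θ * Aᵀ ∧
      LinearIndependent ℝ ![fun i : Fin N => Θ' i k, fun i : Fin N => Θ i k] := by
  obtain ⟨k', hne, hsub⟩ := hmask
  exact latent_factor_not_identifiable_of_masking_general hΘ hA2 hA3 hne hsub
end

section
/- Suppose supp(Q_k) is nonempty for every k ∈ {1,…,K}. Let k ∈ {1,…,K} and suppose that no k' ≠ k masks k, i.e. for every k' ≠ k the support of Q_{k'} is not contained in the support of Q_k. Then the factor loading A_k is identifiable: for every pair of matrices Θ̃ ∈ ℝ^{N×K}, Ã ∈ ℝ^{J×K} satisfying assumptions (1)–(3) and Θ̃Ãᵀ = ΘAᵀ, the column Ã_k is a nonzero scalar multiple of A_k. -/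
/-!
As the columns of `Θ'` are linearly independent, a left inverse of `Θ'` turns `Θ' A'ᵀ = Θ Aᵀ` into
`A'ᵀ = G Aᵀ`, so that `A'_k = ∑ l, G k l • A_l`.
If `l` does not mask `k`, some row loads on `l` but not on `k`. On all rows with the pattern `S` of
that row the column `A'_k` vanishes, and there the columns of `A` indexed by `S` are linearly
independent while the others are zero; as `l ∈ S`, this forces `G k l = 0`. Hence `A'_k` is a
combination of the columns of the factors that mask `k`, and if `k` is the only one, then
`A'_k = G k k • A_k`, where `G k k ≠ 0` because `A'_k ≠ 0`.
-/

open Matrix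

lemma dotProduct_eq_dotProduct_domRestrict {κ R : Type*} [Fintype κ] [NonUnitalNonAssocSemiring R]
    {s : Set κ} [Fintype s] {v : κ → R} (hv : ∀ k ∉ s, v k = 0) (w : κ → R) :
    v ⬝ᵥ w = s.domRestrict v ⬝ᵥ s.domRestrict w := by
  refine (Finset.sum_of_injOn Subtype.val Subtype.val_injective.injOn
    (by simp) ?_ fun _ _ ↦ rfl).symm
  intro k _ hk
  exact mul_eq_zero_of_left (hv k (by simpa using hk)) (w k)

section LoadingMatrix

variable {ι κ R : Type*}

/-- The support of the factor `k` in the design `P`. A design with rows `ι` and factors `κ` is given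
by the set `P i` of factors on which each row `i` loads, so that `R(S)` is the fibre `P ⁻¹' {S}`. -/
def designSupport (P : ι → Set κ) (k : κ) : Set ι :=
  {i | k ∈ P i}

/-- Loading matrices for the design `P`: assumptions (2) and (3) over a semiring. The sets `S` with
`R(S)` nonempty are exactly the patterns `P i` of the rows. -/
structure IsLoading [Semiring R] (P : ι → Set κ) (A : Matrix ι κ R) : Prop where
  apply_eq_zero {i : ι} {k : κ} : k ∉ P i → A i k = 0
  linearIndependent (i : ι) : LinearIndependent R
    (A.submatrix (Subtype.val : P ⁻¹' {P i} → ι) (Subtype.val : P i → κ)).col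

namespace IsLoading

lemma col_ne_zero [Semiring R] [Nontrivial R] {P : ι → Set κ} {A : Matrix ι κ R}
    (hA : IsLoading P A) {k : κ} (hk : (designSupport P k).Nonempty) : A.col k ≠ 0 := by
  obtain ⟨i, hi⟩ := hk
  intro hcol
  refine (hA.linearIndependent i).ne_zero (⟨k, hi⟩ : P i) ?_
  ext j
  exact congrFun hcol j

variable [Fintype κ] [CommSemiring R] {P : ι → Set κ} {A : Matrix ι κ R} {g : κ → R}

lemma eq_zero_of_mulVec_eq_zero (hA : IsLoading P A) {i : ι}
    (hg : ∀ j, P j = P i → (A *ᵥ g) j = 0) {l : κ} (hl : l ∈ P i) : g l = 0 := by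
  classical
  have hinj := mulVec_injective_iff.mpr (hA.linearIndependent i)
  have hzero : (P i).domRestrict g = 0 := hinj <| by
    ext ⟨j, hj : P j = P i⟩
    have hvanish : ∀ m ∉ P i, A j m = 0 := fun m hm ↦ hA.apply_eq_zero (hj ▸ hm)
    rw [mulVec_zero]
    exact (dotProduct_eq_dotProduct_domRestrict hvanish g).symm.trans (hg j hj)
  exact congrFun hzero ⟨l, hl⟩

lemma eq_zero_of_not_designSupport_subset (hA : IsLoading P A) {k l : κ}
    (hg : ∀ j, k ∉ P j → (A *ᵥ g) j = 0)
    (hmask : ¬ designSupport P l ⊆ designSupport P k) : g l = 0 := by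
  obtain ⟨i, hl, hk⟩ := Set.not_subset.mp hmask
  exact hA.eq_zero_of_mulVec_eq_zero (fun j hj ↦ hg j fun hkj ↦ hk (hj ▸ hkj : k ∈ P i)) hl

end IsLoading

end LoadingMatrix

lemma exists_eq_mul_of_mul_eq_mul {ν κ μ ι 𝕜 : Type*} [Fintype κ] [Fintype μ] [Field 𝕜]
    {B : Matrix ν κ 𝕜} {C : Matrix ν μ 𝕜} {X : Matrix κ ι 𝕜} {Y : Matrix μ ι 𝕜}
    (hB : LinearIndependent 𝕜 B.col) (h : B * X = C * Y) : ∃ G : Matrix κ μ 𝕜, X = G * Y := by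
  classical
  obtain ⟨f, hf⟩ := B.mulVecLin.exists_leftInverse_of_injective
    (LinearMap.ker_eq_bot.mpr (mulVec_injective_iff.mpr hB))
  refine ⟨LinearMap.toMatrix' (f ∘ₗ C.mulVecLin), ext_col fun j ↦ ?_⟩
  calc
    X.col j = f (B *ᵥ X.col j) := (LinearMap.congr_fun hf (X.col j)).symm
    _ = f (C *ᵥ Y.col j) := congrArg f (congrArg (fun M ↦ M.col j) h)
    _ = LinearMap.toMatrix' (f ∘ₗ C.mulVecLin) *ᵥ Y.col j := by
      rw [LinearMap.toMatrix'_mulVec, LinearMap.comp_apply, mulVecLin_apply]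

theorem factor_loading_identifiable_of_not_masked_general
    {ν ι κ 𝕜 : Type*} [Fintype κ] [Field 𝕜] {P : ι → Set κ}
    {Θ Θ' : Matrix ν κ 𝕜} {A A' : Matrix ι κ 𝕜} {k : κ}
    (hA : IsLoading P A) (hk : (designSupport P k).Nonempty)
    (hmask : ∀ l, l ≠ k → ¬ designSupport P l ⊆ designSupport P k)
    (hΘ' : LinearIndependent 𝕜 Θ'.col) (hA' : IsLoading P A') (hM : Θ' * A'ᵀ = Θ * Aᵀ) :
    ∃ c : 𝕜, c ≠ 0 ∧ A'.col k = c • A.col k := by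
  classical
  obtain ⟨G, hG⟩ := exists_eq_mul_of_mul_eq_mul hΘ' hM
  have hcomb : A'.col k = A *ᵥ G k := by
    rw [← vecMul_transpose]
    exact congrFun hG k
  have hoff : ∀ l, l ≠ k → G k l = 0 := fun l hl ↦
    hA.eq_zero_of_not_designSupport_subset
      (fun j hj ↦ (congrFun hcomb j).symm.trans (hA'.apply_eq_zero hj)) (hmask l hl)
  have hrow : G k = G k k • Pi.single k 1 := by
    ext l
    obtain rfl | hl := eq_or_ne l k
    · simp
    · simp [hl, hoff l hl]
  have hcol : A'.col k = G k k • A.col k := by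
    rw [hcomb, ← mulVec_single_one A k, ← mulVec_smul, ← hrow]
  refine ⟨G k k, fun hzero ↦ hA'.col_ne_zero hk ?_, hcol⟩
  rw [hcol, hzero, zero_smul]

lemma Assm2.isLoading {J K : ℕ} {A : Matrix (Fin J) (Fin K) ℝ} {Q : Fin J → Fin K → Bool}
    (hA2 : Assm2 A Q) (hA3 : Assm3 A Q) : IsLoading (fun j ↦ {k | Q j k = true}) A where
  apply_eq_zero hk := hA3 _ _ (Bool.eq_false_of_not_eq_true hk)
  linearIndependent i := by
    let P : Fin J → Set (Fin K) := fun j ↦ {k | Q j k = true}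
    have hfibre : Rset Q (P i) = P ⁻¹' {P i} := Set.ext fun _ ↦ Set.ext_iff.symm
    exact hfibre ▸ hA2 (P i) ⟨i, fun _ ↦ Iff.rfl⟩

theorem factor_loading_identifiable_of_not_masked
    {K N J : ℕ} (hK : 0 < K) (hN : 0 < N) (hJ : 0 < J)
    (Θ : Matrix (Fin N) (Fin K) ℝ) (A : Matrix (Fin J) (Fin K) ℝ)
    (Q : Fin J → Fin K → Bool)
    (hΘ : Assm1 Θ) (hA2 : Assm2 A Q) (hA3 : Assm3 A Q)
    (hsupp : ∀ k : Fin K, (suppQ Q k).Nonempty)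
    (k : Fin K)
    (hmask : ∀ k' : Fin K, k' ≠ k → ¬ suppQ Q k' ⊆ suppQ Q k)
    (Θ' : Matrix (Fin N) (Fin K) ℝ) (A' : Matrix (Fin J) (Fin K) ℝ)
    (hΘ' : Assm1 Θ') (hA2' : Assm2 A' Q) (hA3' : Assm3 A' Q)
    (hM : Θ' * A'ᵀ = Θ * Aᵀ) :
    ∃ c : ℝ, c ≠ 0 ∧ (fun j : Fin J => A' j k) = c • (fun j : Fin J => A j k) :=
  factor_loading_identifiable_of_not_masked_general (hA2.isLoading hA3) (hsupp k) hmask hΘ'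
    (hA2'.isLoading hA3') hM
end

section
/- Let k, k' ∈ {1,…,K} with k ≠ k'. Suppose supp(Q_{k'}) is nonempty and k' masks k (i.e. supp(Q_{k'}) ⊆ supp(Q_k)). Then, under assumption (2), the columns A_k and A_{k'} are linearly independent vectors in ℝ^J. -/
/-!
Fix a row `j` and let `S` be the set of columns that are active in it. Then `j ∈ R(S)`, so
assumption (2) makes the columns in `S` linearly independent already on the rows of `R(S)`, and
a fortiori on all rows. Two columns whose supports meet are active in a common row, and masking by
a column with nonempty support makes the supports meet.
-/

open Matrix

theorem linearIndependent_col_comp_of_submatrix {R m n m' n' : Type*} [Semiring R]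
    {A : Matrix m n R} {f : m' → m} {g : n' → n}
    (h : LinearIndependent R (A.submatrix f g).col) : LinearIndependent R (A.col ∘ g) :=
  LinearIndependent.of_comp (LinearMap.funLeft R R f) h

section

variable {J K : ℕ} {A : Matrix (Fin J) (Fin K) ℝ} {Q : Fin J → Fin K → Bool}

theorem mem_Rset_setOf_mem_suppQ (Q : Fin J → Fin K → Bool) (j : Fin J) :
    j ∈ Rset Q {k | j ∈ suppQ Q k} :=
  fun _ => Iff.rfl

theorem Assm2.linearIndepOn_col_setOf_mem_suppQ (hA2 : Assm2 A Q) (j : Fin J) :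
    LinearIndepOn ℝ A.col {k | j ∈ suppQ Q k} :=
  linearIndependent_col_comp_of_submatrix (hA2 _ ⟨j, mem_Rset_setOf_mem_suppQ Q j⟩)

theorem columns_linearIndependent_of_masking_general (hA2 : Assm2 A Q) {k k' : Fin K}
    (hkk' : k ≠ k') (hmeet : (suppQ Q k ∩ suppQ Q k').Nonempty) :
    LinearIndependent ℝ ![A.col k, A.col k'] := by
  obtain ⟨j, hjk, hjk'⟩ := hmeet
  have hpair : LinearIndepOn ℝ A.col {k, k'} :=
    (hA2.linearIndepOn_col_setOf_mem_suppQ j).mono (Set.pair_subset hjk hjk')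
  exact LinearIndependent.pair_iff.mpr ((LinearIndepOn.pair_iff A.col hkk').mp hpair)

end

theorem columns_linearIndependent_of_masking
    {K J : ℕ} (hK : 0 < K) (hJ : 0 < J)
    (A : Matrix (Fin J) (Fin K) ℝ) (Q : Fin J → Fin K → Bool)
    (hA2 : Assm2 A Q)
    (k k' : Fin K) (hkk' : k ≠ k')
    (hne : (suppQ Q k').Nonempty)
    (hmask : suppQ Q k' ⊆ suppQ Q k) :
    LinearIndependent ℝ ![fun j : Fin J => A j k, fun j : Fin J => A j k'] :=
  columns_linearIndependent_of_masking_general hA2 hkk'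
    (hne.mono (Set.subset_inter hmask subset_rfl))
end

section
/- Let k ∈ {1,…,K} and suppose that {k} equals the intersection of all subsets S ⊆ {1,…,K} such that k ∈ S and R(S) is nonempty (with at least one such S existing). Then k does not mask any k' ≠ k, i.e. for every k' ≠ k the support of Q_k is not contained in the support of Q_{k'}. -/
open Matrix

/-!
The sets `S` with `R(S)` nonempty are exactly the supports of the rows of `Q`. Hence `k'` belongs
to every such `S` containing `k` if and only if every row with a `1` in column `k` also has a `1`
in column `k'`, that is, `k` masks `k'`.
-/

theorem mem_Rset_iff_setOf_mem_suppQ_eq {J K : ℕ} {Q : Fin J → Fin K → Bool}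
    {S : Set (Fin K)} {j : Fin J} : j ∈ Rset Q S ↔ {k | j ∈ suppQ Q k} = S :=
  Set.ext_iff.symm

theorem iInter_Rset_nonempty_eq_setOf_suppQ_subset {J K : ℕ} (Q : Fin J → Fin K → Bool)
    (k : Fin K) :
    ⋂ S ∈ {S : Set (Fin K) | k ∈ S ∧ (Rset Q S).Nonempty}, S =
      {k' | suppQ Q k ⊆ suppQ Q k'} := by
  apply Set.Subset.antisymm
  · intro k' hk' j hjk
    have hj : j ∈ Rset Q {l | j ∈ suppQ Q l} := mem_Rset_iff_setOf_mem_suppQ_eq.mpr rfl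
    exact Set.mem_iInter₂.mp hk' {l | j ∈ suppQ Q l} ⟨hjk, j, hj⟩
  · intro k' hsub
    refine Set.mem_iInter₂.mpr ?_
    rintro S ⟨hkS, j, hj⟩
    obtain rfl := mem_Rset_iff_setOf_mem_suppQ_eq.mp hj
    exact hsub hkS

theorem not_masking_of_singleton_eq_iInter
    {K J : ℕ} (hK : 0 < K) (hJ : 0 < J)
    (Q : Fin J → Fin K → Bool)
    (k : Fin K)
    (hex : ∃ S : Set (Fin K), k ∈ S ∧ (Rset Q S).Nonempty)
    (hinter : ({k} : Set (Fin K)) =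
      ⋂ S ∈ {S : Set (Fin K) | k ∈ S ∧ (Rset Q S).Nonempty}, S) :
    ∀ k' : Fin K, k' ≠ k → ¬ suppQ Q k ⊆ suppQ Q k' := by
  intro k' hne hsub
  have hmem : k' ∈ ({k} : Set (Fin K)) := by
    rw [hinter, iInter_Rset_nonempty_eq_setOf_suppQ_subset]
    exact hsub
  exact hne hmem
end

section
/- Suppose Θ, A, Q satisfy assumptions (1)–(3), and let S ⊆ {1,…,K} with R(S) nonempty. Then the linear span of the columns {M_j : j ∈ R(S)} of M = ΘAᵀ equals the linear span of {Θ_k : k ∈ S}, and this subspace of ℝ^N has dimension |S|. -/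
/-!
For `j ∈ R(S)`, row `j` of `A` vanishes off `S`, so `M_j` is the image of the restricted row
`A_{j,S} ∈ ℝ^S` under the linear map `w ↦ ∑ k ∈ S, w k • Θ_k`. The columns of `A_{[R(S),S]}` are
linearly independent, so its rows span all of `ℝ^S`; hence the `M_j` span the range of this map,
which is the span of the `Θ_k` with `k ∈ S`.
-/

open Matrix

section Span

variable {m n ι F : Type*} [Fintype ι]

lemma span_range_sum_smul_eq_of_linearIndependent [Field F] {V : Type*} [AddCommGroup V]
    [Module F V] {a : ι → n → F} (ha : LinearIndependent F a) (v : ι → V) :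
    Submodule.span F (Set.range fun j => ∑ k, a k j • v k) =
      Submodule.span F (Set.range v) := by
  calc Submodule.span F (Set.range fun j => ∑ k, a k j • v k)
      = (Submodule.span F (Set.range (flip a))).map (Fintype.linearCombination F v) := by
        rw [Submodule.map_span, ← Set.range_comp]
        rfl
    _ = (⊤ : Submodule F (ι → F)).map (Fintype.linearCombination F v) := by
        rw [span_flip_eq_top_iff_linearIndependent.mpr ha]
    _ = Submodule.span F (Set.range v) := by
        rw [Submodule.map_top, Fintype.range_linearCombination]

lemma col_mul_transpose_eq_sum_smul_col [CommSemiring F] (B : Matrix m ι F)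
    (A : Matrix n ι F) (j : n) : (B * Aᵀ).col j = ∑ k, A j k • B.col k := by
  ext i
  simp [mul_apply, mul_comm]

lemma col_mul_transpose_eq_sum_smul_col_of_support_subset [CommSemiring F] (B : Matrix m ι F)
    {A : Matrix n ι F} {S : Finset ι} {j : n} (hj : Function.support (A j) ⊆ S) :
    (B * Aᵀ).col j = ∑ k : S, A j k • B.col k := by
  have hzero : ∀ k ∉ S, A j k • B.col k = 0 := fun k hk => by
    rw [Function.notMem_support.mp fun h => hk (hj h), zero_smul]
  calc (B * Aᵀ).col j = ∑ k, A j k • B.col k := col_mul_transpose_eq_sum_smul_col B A j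
    _ = ∑ k ∈ S, A j k • B.col k :=
        (Finset.sum_subset S.subset_univ fun k _ hk => hzero k hk).symm
    _ = ∑ k : S, A j k • B.col k := (Finset.sum_coe_sort S fun k => A j k • B.col k).symm

lemma span_col_mul_transpose_image_eq [Field F] (B : Matrix m ι F) {A : Matrix n ι F}
    {R : Set n} {S : Finset ι} (hA : LinearIndependent F fun (k : S) (j : R) => A j k)
    (hsupp : ∀ j ∈ R, Function.support (A j) ⊆ S) :
    Submodule.span F ((B * Aᵀ).col '' R) = Submodule.span F (B.col '' S) := by
  have hcol : (fun j : R => (B * Aᵀ).col j) = fun j : R => ∑ k : S, A j k • B.col k :=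
    funext fun j => col_mul_transpose_eq_sum_smul_col_of_support_subset B (hsupp j j.2)
  rw [Set.image_eq_range, Set.image_eq_range, hcol]
  exact span_range_sum_smul_eq_of_linearIndependent hA fun k : S => B.col k

theorem span_columns_M_eq_span_Theta_general [Field F] (Θ : Matrix m ι F) (A : Matrix n ι F)
    {R : Set n} {S : Finset ι} (hΘ : LinearIndepOn F Θ.col S)
    (hA : LinearIndependent F fun (k : S) (j : R) => A j k)
    (hsupp : ∀ j ∈ R, Function.support (A j) ⊆ S) :
    Submodule.span F ((Θ * Aᵀ).col '' R) = Submodule.span F (Θ.col '' S) ∧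
      Module.finrank F (Submodule.span F ((Θ * Aᵀ).col '' R)) = S.card := by
  have hspan := span_col_mul_transpose_image_eq Θ hA hsupp
  refine ⟨hspan, ?_⟩
  rw [hspan, Set.image_eq_range]
  exact (finrank_span_eq_card hΘ).trans (Fintype.card_coe S)

end Span

lemma support_subset_of_mem_Rset {J K : ℕ} {A : Matrix (Fin J) (Fin K) ℝ}
    {Q : Fin J → Fin K → Bool} (hA : Assm3 A Q) {S : Set (Fin K)} {j : Fin J}
    (hj : j ∈ Rset Q S) : Function.support (A j) ⊆ S := fun k hk =>
  (hj k).mp (Bool.of_not_eq_false fun hQ => hk (hA j k hQ))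

theorem span_columns_M_eq_span_Theta
    {K N J : ℕ} (hK : 0 < K) (hN : 0 < N) (hJ : 0 < J)
    (Θ : Matrix (Fin N) (Fin K) ℝ) (A : Matrix (Fin J) (Fin K) ℝ)
    (Q : Fin J → Fin K → Bool)
    (hΘ : Assm1 Θ) (hA2 : Assm2 A Q) (hA3 : Assm3 A Q)
    (S : Finset (Fin K)) (hS : (Rset Q ↑S).Nonempty) :
    Submodule.span ℝ ((fun j : Fin J => fun i : Fin N => (Θ * Aᵀ) i j) '' Rset Q ↑S) =
      Submodule.span ℝ ((fun k : Fin K => fun i : Fin N => Θ i k) '' ↑S) ∧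
    Module.finrank ℝ
      ↥(Submodule.span ℝ ((fun j : Fin J => fun i : Fin N => (Θ * Aᵀ) i j) '' Rset Q ↑S))
      = S.card :=
  span_columns_M_eq_span_Theta_general Θ A (LinearIndependent.linearIndepOn hΘ S) (hA2 S hS)
    fun _ hj => support_subset_of_mem_Rset hA3 hj
end

section
/- Suppose A and Q satisfy assumptions (2) and (3). Let k₀ ∈ {1,…,K} and let c_1,…,c_K ∈ ℝ be coefficients such that Σ_{k=1}^K c_k·A_k(j) = 0 for every j ∉ supp(Q_{k₀}). Then for every k' ≠ k₀ with c_{k'} ≠ 0, the index k' masks k₀, i.e. supp(Q_{k'}) ⊆ supp(Q_{k₀}). -/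
/-!
If a row `j₀` lay in the support of column `k'` but not of column `k₀`, then no row with the same
incidence pattern as `j₀` would lie in the support of `k₀`, so the combination would vanish on all
of them. Only the columns of that pattern contribute there, and they are independent on these rows,
so the coefficient of `k'` would be zero.
-/

open Matrix

section RowPatterns

variable {R M ι κ : Type*} [Semiring R] [AddCommMonoid M] [Module R M]
  {s : Finset κ} {c : κ → R} {k : κ}

theorem coeff_eq_zero_of_linearIndepOn_of_sum_smul_eq_zero {v : κ → M} {S : Set κ}
    (hv : LinearIndepOn R v S) (hv_zero : ∀ i ∉ S, v i = 0) (hsum : ∑ i ∈ s, c i • v i = 0)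
    (hks : k ∈ s) (hkS : k ∈ S) : c k = 0 := by
  classical
  have hsum_subtype : ∑ i ∈ s.subtype (· ∈ S), c i • v i = 0 := by
    rw [Finset.sum_subtype_eq_sum_filter (f := fun i ↦ c i • v i), Finset.sum_filter_of_ne, hsum]
    intro i _ hi
    by_contra hiS
    exact hi (by rw [hv_zero i hiS, smul_zero])
  exact linearIndependent_iff'ₛ.mp hv (s.subtype (· ∈ S)) (fun i ↦ c i) 0
    (by simpa only [Pi.zero_apply, zero_smul, Finset.sum_const_zero] using hsum_subtype)
    ⟨k, hkS⟩ (Finset.mem_subtype.mpr hks)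

theorem coeff_eq_zero_of_sum_smul_eq_zero_on_rows {A : ι → κ → M} {T : Set ι} {S : Set κ}
    (hA : LinearIndepOn R (fun i (j : T) ↦ A j i) S) (hA_zero : ∀ j ∈ T, ∀ i ∉ S, A j i = 0)
    (hsum : ∀ j ∈ T, ∑ i ∈ s, c i • A j i = 0) (hks : k ∈ s) (hkS : k ∈ S) : c k = 0 := by
  refine coeff_eq_zero_of_linearIndepOn_of_sum_smul_eq_zero hA ?_ ?_ hks hkS
  · exact fun i hi ↦ funext fun j ↦ hA_zero j j.2 i hi
  · ext j
    simpa only [Finset.sum_apply, Pi.smul_apply, Pi.zero_apply] using hsum j j.2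

theorem masks_of_vanishing_combination_general {A : ι → κ → M} {Q : ι → κ → Prop} {k₀ : κ}
    (hA : ∀ j₀, LinearIndepOn R (fun i (j : {j | ∀ i, Q j i ↔ Q j₀ i}) ↦ A j i) {i | Q j₀ i})
    (hA_zero : ∀ j i, ¬ Q j i → A j i = 0)
    (hsum : ∀ j, ¬ Q j k₀ → ∑ i ∈ s, c i • A j i = 0) (hks : k ∈ s) (hck : c k ≠ 0) :
    {j | Q j k} ⊆ {j | Q j k₀} := by
  intro j₀ hj₀k
  by_contra hj₀k₀
  refine hck (coeff_eq_zero_of_sum_smul_eq_zero_on_rows (hA j₀) ?_ ?_ hks hj₀k)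
  · exact fun j hj i hi ↦ hA_zero j i (mt (hj i).mp hi)
  · exact fun j hj ↦ hsum j (mt (hj k₀).mp hj₀k₀)

end RowPatterns

theorem masks_of_vanishing_combination
    {K J : ℕ} (hK : 0 < K) (hJ : 0 < J)
    (A : Matrix (Fin J) (Fin K) ℝ) (Q : Fin J → Fin K → Bool)
    (hA2 : Assm2 A Q) (hA3 : Assm3 A Q)
    (k₀ : Fin K) (c : Fin K → ℝ)
    (hc : ∀ j : Fin J, j ∉ suppQ Q k₀ → ∑ k : Fin K, c k * A j k = 0)
    (k' : Fin K) (hk' : k' ≠ k₀) (hck' : c k' ≠ 0) :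
    suppQ Q k' ⊆ suppQ Q k₀ :=
  masks_of_vanishing_combination_general (Q := fun j k ↦ Q j k = true)
    (fun j₀ ↦ hA2 {k | Q j₀ k = true} ⟨j₀, fun _ ↦ Iff.rfl⟩)
    (fun j k hjk ↦ hA3 j k (Bool.eq_false_of_not_eq_true hjk)) hc (Finset.mem_univ k') hck'
end
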